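/- arXiv:2212.01642 — 2 statements merged into one kernel-verified Lean document; each statement's English description precedes it below -/
import Mathlib

section
/- Let r = a + bi + cj + dk be a unit quaternion (a² + b² + c² + d² = 1), and let w be a pure quaternion that is orthogonal (with respect to the Euclidean inner product on ℝ⁴ ≅ ℍ) to the pure quaternion bi + cj + dk. Then the Euclidean inner product of w and r w conj(r) equals (2a² − 1)·‖w‖². In particular, the angle θ of the rotation R_r satisfies cos θ = 2a² − 1, i.e. a = cos(θ/2). -/
open Quaternion
open scoped RealInnerProductSpace

/-- Let `r = a + bi + cj + dk` be a unit quaternion and let `w` be a pure quaternion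
orthogonal to the pure quaternion `bi + cj + dk`.  Then the Euclidean inner product
of `w` and `r * w * conj r` equals `(2a² − 1)·‖w‖²`; hence the rotation angle `θ`
of `R_r` satisfies `cos θ = 2a² − 1`. -/
theorem angle_of_rotation (a b c d : ℝ) (r : ℍ[ℝ]) (hr : r = ⟨a, b, c, d⟩)
    (h : a ^ 2 + b ^ 2 + c ^ 2 + d ^ 2 = 1)
    (w : ℍ[ℝ]) (hw : w.re = 0)
    (horth : ⟪w, (⟨0, b, c, d⟩ : ℍ[ℝ])⟫ = 0) :
    ⟪w, r * w * star r⟫ = (2 * a ^ 2 - 1) * ‖w‖ ^ 2 := by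
  -- With `v = bi + cj + dk`, pure `w` satisfies
  -- `⟪w, r * w * star r⟫ = (a² - ‖v‖²) * ‖w‖² + 2 * ⟪w, v⟫²`;
  -- then `⟪w, v⟫ = 0` and `‖v‖² = 1 - a²` give the claim.
  rw [sq ‖w‖, ← Quaternion.normSq_eq_norm_mul_self, Quaternion.normSq_def']
  -- The anonymous constructors have type `QuaternionAlgebra ℝ (-1) 0 (-1)`, which blocks rewriting
  -- with lemmas about `ℍ[ℝ]`; hence `r` and `v` stay variables with known coordinates.
  have hre : r.re = a := by rw [hr]
  have hi : r.imI = b := by rw [hr]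
  have hj : r.imJ = c := by rw [hr]
  have hk : r.imK = d := by rw [hr]
  obtain ⟨v, hv, v0, v1, v2, v3⟩ : ∃ v : ℍ[ℝ], ⟪w, v⟫ = 0 ∧ v.re = 0 ∧ v.imI = b ∧
      v.imJ = c ∧ v.imK = d := ⟨_, horth, rfl, rfl, rfl, rfl⟩
  simp only [Quaternion.inner_def, Quaternion.re_mul, Quaternion.imI_mul, Quaternion.imJ_mul,
    Quaternion.imK_mul, Quaternion.re_star, Quaternion.imI_star, Quaternion.imJ_star,
    Quaternion.imK_star, hw, hre, hi, hj, hk, v0, v1, v2, v3] at hv ⊢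
  linear_combination 2 * (b * w.imI + c * w.imJ + d * w.imK) * hv
    - (w.imI ^ 2 + w.imJ ^ 2 + w.imK ^ 2) * h
end

section
/- Let P = (p₁, p₂, p₃) with p₁² + p₂² + p₃² = 1 and p₁ ≠ −1, and set r₁ = (1/√(2(1 + p₁)))·((1 + p₁)i + p₂ j + p₃ k). Then a unit quaternion r satisfies r · i · conj(r) = p₁ i + p₂ j + p₃ k if and only if there exists a real number t such that r = r₁·(cos t + i sin t). That is, the fiber of the Hopf map over P is the circle {r₁ e^{it} : 0 ≤ t ≤ 2π}. -/
open Quaternion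

/-!
The base point `r₁` is a unit quaternion lying over `P`, that is `r₁ i conj(r₁) = P`
(`basePoint_unit`, `basePoint_hopf`). Hence a unit quaternion `r` lies over `P` exactly when
`r i conj(r) = r₁ i conj(r₁)`, which says that the unit quaternion `s = conj(r₁) r` commutes
with `i`. The centralizer of `i` is `ℝ ⊕ ℝi` (`imJ_imK_eq_zero_of_commute`), whose unit elements are the
`e^{it}`, so this means `r = r₁ s = r₁ e^{it}` for some `t`.
-/

lemma star_mul_self_of_norm_one {r : ℍ[ℝ]} (hr : ‖r‖ = 1) : star r * r = 1 := by
  rw [Quaternion.star_mul_self, Quaternion.normSq_eq_norm_mul_self, hr]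
  simp

/-- The quaternion unit `i`. -/
def unitI : ℍ[ℝ] := ⟨0, 1, 0, 0⟩

lemma unitI_re : unitI.re = 0 := rfl
lemma unitI_imI : unitI.imI = 1 := rfl
lemma unitI_imJ : unitI.imJ = 0 := rfl
lemma unitI_imK : unitI.imK = 0 := rfl

/-- The Hopf map in coordinates. -/
lemma hopf_eq (q : ℍ[ℝ]) (x y z : ℝ)
    (hx : q.re ^ 2 + q.imI ^ 2 - q.imJ ^ 2 - q.imK ^ 2 = x)
    (hy : 2 * (q.imI * q.imJ + q.re * q.imK) = y)
    (hz : 2 * (q.imI * q.imK - q.re * q.imJ) = z) :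
    q * unitI * star q = (⟨0, x, y, z⟩ : ℍ[ℝ]) := by
  apply Quaternion.ext
  · change _ = (0 : ℝ)
    simp only [Quaternion.re_mul, Quaternion.imI_mul, Quaternion.imJ_mul, Quaternion.imK_mul,
      Quaternion.re_star, Quaternion.imI_star, Quaternion.imJ_star, Quaternion.imK_star,
      unitI_re, unitI_imI, unitI_imJ, unitI_imK]
    ring
  · change _ = x
    simp only [Quaternion.re_mul, Quaternion.imI_mul, Quaternion.imJ_mul, Quaternion.imK_mul,
      Quaternion.re_star, Quaternion.imI_star, Quaternion.imJ_star, Quaternion.imK_star,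
      unitI_re, unitI_imI, unitI_imJ, unitI_imK]
    linear_combination hx
  · change _ = y
    simp only [Quaternion.re_mul, Quaternion.imI_mul, Quaternion.imJ_mul, Quaternion.imK_mul,
      Quaternion.re_star, Quaternion.imI_star, Quaternion.imJ_star, Quaternion.imK_star,
      unitI_re, unitI_imI, unitI_imJ, unitI_imK]
    linear_combination hy
  · change _ = z
    simp only [Quaternion.re_mul, Quaternion.imI_mul, Quaternion.imJ_mul, Quaternion.imK_mul,
      Quaternion.re_star, Quaternion.imI_star, Quaternion.imJ_star, Quaternion.imK_star,
      unitI_re, unitI_imI, unitI_imJ, unitI_imK]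
    linear_combination hz

/-- The centralizer of `i` is `ℝ ⊕ ℝi`. -/
lemma imJ_imK_eq_zero_of_commute {s : ℍ[ℝ]} (h : s * unitI = unitI * s) :
    s.imJ = 0 ∧ s.imK = 0 := by
  have hJ := congrArg (fun q : ℍ[ℝ] => q.imJ) h
  have hK := congrArg (fun q : ℍ[ℝ] => q.imK) h
  simp only [Quaternion.imJ_mul, Quaternion.imK_mul, unitI_re, unitI_imI, unitI_imJ,
    unitI_imK] at hJ hK
  constructor <;> linarith

lemma exists_cos_sin {a b : ℝ} (h : a ^ 2 + b ^ 2 = 1) :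
    ∃ t : ℝ, a = Real.cos t ∧ b = Real.sin t := by
  have hn : ‖(⟨a, b⟩ : ℂ)‖ = 1 := by
    rw [← sq_eq_sq₀ (norm_nonneg _) zero_le_one, Complex.sq_norm, Complex.normSq_mk]
    linarith
  have h0 : (⟨a, b⟩ : ℂ) ≠ 0 := by
    rw [← norm_ne_zero_iff, hn]
    exact one_ne_zero
  refine ⟨Complex.arg ⟨a, b⟩, ?_, ?_⟩
  · rw [Complex.cos_arg h0, hn, div_one]
  · rw [Complex.sin_arg, hn, div_one]

lemma basePoint_unit {p₁ p₂ p₃ c : ℝ} (hP : p₁ ^ 2 + p₂ ^ 2 + p₃ ^ 2 = 1)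
    (hc : c ^ 2 * (2 * (1 + p₁)) = 1) {q : ℍ[ℝ]} (hq : q = c • (⟨0, 1 + p₁, p₂, p₃⟩ : ℍ[ℝ])) :
    ‖q‖ = 1 := by
  rw [← sq_eq_sq₀ (norm_nonneg _) zero_le_one, sq, ← Quaternion.normSq_eq_norm_mul_self,
    Quaternion.normSq_def', hq]
  change (c * 0) ^ 2 + (c * (1 + p₁)) ^ 2 + (c * p₂) ^ 2 + (c * p₃) ^ 2 = 1 ^ 2
  linear_combination hc + c ^ 2 * hP

lemma basePoint_hopf {p₁ p₂ p₃ c : ℝ} (hP : p₁ ^ 2 + p₂ ^ 2 + p₃ ^ 2 = 1)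
    (hc : c ^ 2 * (2 * (1 + p₁)) = 1) {q : ℍ[ℝ]} (hq : q = c • (⟨0, 1 + p₁, p₂, p₃⟩ : ℍ[ℝ])) :
    q * unitI * star q = (⟨0, p₁, p₂, p₃⟩ : ℍ[ℝ]) := by
  apply hopf_eq <;> rw [hq]
  · change (c * 0) ^ 2 + (c * (1 + p₁)) ^ 2 - (c * p₂) ^ 2 - (c * p₃) ^ 2 = p₁
    linear_combination p₁ * hc - c ^ 2 * hP
  · change 2 * (c * (1 + p₁) * (c * p₂) + c * 0 * (c * p₃)) = p₂
    linear_combination p₂ * hc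
  · change 2 * (c * (1 + p₁) * (c * p₃) - c * 0 * (c * p₂)) = p₃
    linear_combination p₃ * hc

/-- Conjugation by `e^{it}` fixes `i`. -/
lemma circle_conj_i {t : ℝ} {e : ℍ[ℝ]} (he : e = ⟨Real.cos t, Real.sin t, 0, 0⟩) :
    e * unitI * star e = unitI := by
  apply hopf_eq <;> rw [he]
  · change Real.cos t ^ 2 + Real.sin t ^ 2 - 0 ^ 2 - 0 ^ 2 = 1
    linear_combination Real.cos_sq_add_sin_sq t
  · change 2 * (Real.sin t * 0 + Real.cos t * 0) = 0
    ring
  · change 2 * (Real.sin t * 0 - Real.cos t * 0) = 0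
    ring

/-- For `P = (p₁,p₂,p₃)` on `S²` with `p₁ ≠ −1` and
`r₁ = (1/√(2(1+p₁)))·((1+p₁)i + p₂j + p₃k)`, a unit quaternion `r` satisfies
`r i conj(r) = p₁i + p₂j + p₃k` iff `r = r₁ e^{it}` for some real `t`: the fiber of
the Hopf map over `P` is the circle `{r₁ e^{it} : 0 ≤ t ≤ 2π}`. -/
theorem hopf_fiber_is_circle (p₁ p₂ p₃ : ℝ)
    (hP : p₁ ^ 2 + p₂ ^ 2 + p₃ ^ 2 = 1) (hp₁ : p₁ ≠ -1)
    (r₁ : ℍ[ℝ])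
    (hr₁ : r₁ = (1 / Real.sqrt (2 * (1 + p₁))) • (⟨0, 1 + p₁, p₂, p₃⟩ : ℍ[ℝ]))
    (r : ℍ[ℝ]) (hr : ‖r‖ = 1) :
    (r * ⟨0, 1, 0, 0⟩ * star r : ℍ[ℝ]) = ⟨0, p₁, p₂, p₃⟩
      ↔ ∃ t : ℝ, r = r₁ * ⟨Real.cos t, Real.sin t, 0, 0⟩ := by
  have hpos : 0 < 1 + p₁ := by
    have hle : -1 ≤ p₁ := by nlinarith [sq_nonneg p₂, sq_nonneg p₃]
    have := lt_of_le_of_ne hle hp₁.symm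
    linarith
  have hc : (1 / Real.sqrt (2 * (1 + p₁))) ^ 2 * (2 * (1 + p₁)) = 1 := by
    rw [div_pow, Real.sq_sqrt (by positivity)]
    field_simp
  have hn₁ : ‖r₁‖ = 1 := basePoint_unit hP hc hr₁
  have hhopf := basePoint_hopf hP hc hr₁
  have h₁ := star_mul_self_of_norm_one hn₁
  have h₁' : r₁ * star r₁ = 1 := by
    simpa using star_mul_self_of_norm_one ((Quaternion.norm_star r₁).trans hn₁)
  rw [← hhopf]
  change r * unitI * star r = r₁ * unitI * star r₁ ↔ _
  constructor
  · intro h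
    have hcomm : (star r₁ * r) * unitI = unitI * (star r₁ * r) := by
      calc (star r₁ * r) * unitI = star r₁ * (r * unitI * (star r * r)) := by
            rw [star_mul_self_of_norm_one hr, mul_one, mul_assoc]
        _ = star r₁ * (r * unitI * star r) * r := by simp only [mul_assoc]
        _ = (star r₁ * r₁) * unitI * (star r₁ * r) := by rw [h]; simp only [mul_assoc]
        _ = unitI * (star r₁ * r) := by rw [h₁, one_mul]
    obtain ⟨hJ, hK⟩ := imJ_imK_eq_zero_of_commute hcomm
    have hns : ‖star r₁ * r‖ = 1 := by rw [norm_mul, Quaternion.norm_star, hn₁, hr, one_mul]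
    have hr_eq : r = r₁ * (star r₁ * r) := by rw [← mul_assoc, h₁', one_mul]
    generalize star r₁ * r = s at hJ hK hns hr_eq
    have hsq : s.re ^ 2 + s.imI ^ 2 = 1 := by
      have hN : Quaternion.normSq s = 1 := by
        rw [Quaternion.normSq_eq_norm_mul_self, hns, one_mul]
      rw [Quaternion.normSq_def', hJ, hK] at hN
      linear_combination hN
    obtain ⟨t, hct, hst⟩ := exists_cos_sin hsq
    have hs : s = ⟨Real.cos t, Real.sin t, 0, 0⟩ := Quaternion.ext _ _ hct hst hJ hK
    exact ⟨t, by rw [hr_eq, hs]⟩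
  · rintro ⟨t, ht⟩
    obtain ⟨e, he⟩ : ∃ e : ℍ[ℝ], e = ⟨Real.cos t, Real.sin t, 0, 0⟩ := ⟨_, rfl⟩
    have hre : r = r₁ * e := by rw [ht, he]
    calc r * unitI * star r = r₁ * (e * unitI * star e) * star r₁ := by
          rw [hre, star_mul]; simp only [mul_assoc]
      _ = r₁ * unitI * star r₁ := by rw [circle_conj_i he]
end
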